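/- Each of the four permutations (0, 4, 7, 3, 1, 2, 8, 6, 5, 11, 13, 10, 9, 12), (0, 4, 7, 3, 1, 2, 8, 6, 5, 13, 15, 12, 10, 11, 14, 9), (0, 4, 7, 3, 1, 2, 8, 6, 5, 12, 13, 11, 9, 10, 16, 15, 14, 17), and (0, 9, 12, 8, 1, 7, 13, 11, 10, 14, 15, 6, 3, 4, 17, 16, 5, 18, 19, 2) is right-crucial. -/

import Mathlib

/-- The permutation `σ` of length `n` has a square starting at position `k`
with half-length `ℓ`: the factors `(σ k, …, σ (k+ℓ-1))` and
`(σ (k+ℓ), …, σ (k+2ℓ-1))` are order-isomorphic. -/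
def HasSquareAt {n : ℕ} (σ : Fin n → Fin n) (k ℓ : ℕ) : Prop :=
  2 ≤ ℓ ∧ ∃ hb : k + 2 * ℓ ≤ n, ∀ (i j : ℕ) (hi : i < ℓ) (hj : j < ℓ),
    (σ ⟨k + i, by omega⟩ < σ ⟨k + j, by omega⟩ ↔
      σ ⟨k + ℓ + i, by omega⟩ < σ ⟨k + ℓ + j, by omega⟩)

/-- `σ` contains a square. -/
def ContainsSquare {n : ℕ} (σ : Fin n → Fin n) : Prop :=
  ∃ k ℓ : ℕ, HasSquareAt σ k ℓ

/-- `σ` is square-free: it contains no square. -/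
def SquareFree {n : ℕ} (σ : Fin n → Fin n) : Prop :=
  ¬ ContainsSquare σ

/-- `π` (of length `n+1`) is a right-extension of `σ` (of length `n`):
the prefix `(π 0, …, π (n-1))` is order-isomorphic to `σ`. -/
def IsRightExtension {n : ℕ} (σ : Fin n → Fin n) (π : Fin (n + 1) → Fin (n + 1)) : Prop :=
  ∀ i j : Fin n, π i.castSucc < π j.castSucc ↔ σ i < σ j

/-- `π` (of length `n+1`) is a left-extension of `σ` (of length `n`):
the suffix `(π 1, …, π n)` is order-isomorphic to `σ`. -/
def IsLeftExtension {n : ℕ} (σ : Fin n → Fin n) (π : Fin (n + 1) → Fin (n + 1)) : Prop :=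
  ∀ i j : Fin n, π i.succ < π j.succ ↔ σ i < σ j

/-- `σ` is right-crucial: square-free, and every right-extension contains a square. -/
def RightCrucial {n : ℕ} (σ : Equiv.Perm (Fin n)) : Prop :=
  SquareFree ⇑σ ∧ ∀ π : Equiv.Perm (Fin (n + 1)), IsRightExtension ⇑σ ⇑π → ContainsSquare ⇑π

/-- `σ` is left-crucial: square-free, and every left-extension contains a square. -/
def LeftCrucial {n : ℕ} (σ : Equiv.Perm (Fin n)) : Prop :=
  SquareFree ⇑σ ∧ ∀ π : Equiv.Perm (Fin (n + 1)), IsLeftExtension ⇑σ ⇑π → ContainsSquare ⇑π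

/-- `σ` is bicrucial: both left-crucial and right-crucial. -/
def Bicrucial {n : ℕ} (σ : Equiv.Perm (Fin n)) : Prop :=
  LeftCrucial σ ∧ RightCrucial σ

/-- Boolean test for a square at position `k` of half-length `l`. -/
def sqB (g : ℕ → ℕ) (k l : ℕ) : Bool :=
  (List.range l).all fun i => (List.range l).all fun j =>
    (Nat.blt (g (k + i)) (g (k + j))) == (Nat.blt (g (k + l + i)) (g (k + l + j)))

/-- Boolean test for some square in the first `m` values of `g`. -/
def anySqB (m : ℕ) (g : ℕ → ℕ) : Bool :=
  (List.range (m + 1)).any fun k => (List.range (m + 1)).any fun l =>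
    Nat.ble 2 l && Nat.ble (k + 2 * l) m && sqB g k l

theorem sqB_iff (g : ℕ → ℕ) (k l : ℕ) : sqB g k l = true ↔
    ∀ i j : ℕ, i < l → j < l → (g (k + i) < g (k + j) ↔ g (k + l + i) < g (k + l + j)) := by
  simp only [sqB, List.all_eq_true, List.mem_range, beq_iff_eq]
  constructor
  · intro h i j hi hj
    have := Bool.eq_iff_iff.1 (h i hi j hj)
    rwa [Nat.blt_eq, Nat.blt_eq] at this
  · intro h i hi j hj
    rw [Bool.eq_iff_iff, Nat.blt_eq, Nat.blt_eq]
    exact h i j hi hj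

theorem containsSquare_iff {m : ℕ} (f : Fin m → Fin m) (g : ℕ → ℕ)
    (h : ∀ i j : Fin m, f i < f j ↔ g i < g j) :
    ContainsSquare f ↔ anySqB m g = true := by
  simp only [anySqB, List.any_eq_true, List.mem_range, Bool.and_eq_true, Nat.ble_eq, sqB_iff]
  constructor
  · rintro ⟨k, l, h2, hb, hs⟩
    refine ⟨k, by omega, l, by omega, ⟨h2, hb⟩, fun i j hi hj => ?_⟩
    have := hs i j hi hj
    rwa [h, h] at this
  · rintro ⟨k, _, l, _, ⟨h2, hb⟩, hs⟩
    refine ⟨k, l, h2, hb, fun i j hi hj => ?_⟩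
    rw [h, h]
    exact hs i j hi hj

/-- The extension of the values of `L` (of length `n`) by a last value just below `t`. -/
def extVal (n : ℕ) (L : List ℕ) (t i : ℕ) : ℕ :=
  bif Nat.blt i n then 2 * L.getD i 0 + 1 else 2 * t

theorem exists_threshold {n : ℕ} (σ : Equiv.Perm (Fin n)) (A : Fin n → Prop)
    (hA : ∀ i j, σ i < σ j → A j → A i) :
    ∃ t ≤ n, ∀ i, A i ↔ (σ i : ℕ) < t := by
  classical
  have hex : ∃ t, ∀ i, (σ i : ℕ) = t ∨ n ≤ t → t < n → ¬ A i := ⟨n, fun _ _ h => by omega⟩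
  refine ⟨Nat.find hex, Nat.find_min' hex (fun _ _ h => by omega), fun i => ?_⟩
  constructor
  · intro hi
    by_contra hlt
    have hlt := not_lt.mp hlt
    have hn : Nat.find hex < n := lt_of_le_of_lt hlt (σ i).2
    have hs := Nat.find_spec hex (σ.symm ⟨Nat.find hex, hn⟩) (Or.inl (by simp)) hn
    rcases hlt.eq_or_lt with he | hl
    · exact Nat.find_spec hex i (Or.inl he.symm) hn hi
    · apply hs
      apply hA _ i _ hi
      rw [Equiv.apply_symm_apply]
      exact hl
  · intro hlt
    have := Nat.find_min hex hlt
    push Not at this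
    obtain ⟨j, hj, hjn, hAj⟩ := this
    have : j = i := by
      rcases hj with hj | hj
      · exact σ.injective (Fin.ext hj)
      · omega
    exact this ▸ hAj

theorem rightCrucial_of_check {n : ℕ} (L : List ℕ) (σ : Equiv.Perm (Fin n))
    (hσ : ∀ i : Fin n, (σ i : ℕ) = L.getD (i : ℕ) 0)
    (h1 : anySqB n (fun i => L.getD i 0) = false)
    (h2 : ((List.range (n + 1)).all fun t => anySqB (n + 1) (extVal n L t)) = true) :
    RightCrucial σ := by
  constructor
  · intro hc
    rw [containsSquare_iff _ (fun i => L.getD i 0)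
      (fun i j => by rw [Fin.lt_def, hσ, hσ])] at hc
    rw [h1] at hc
    cases hc
  · intro π hπ
    obtain ⟨t, htn, ht⟩ := exists_threshold σ (fun i => π i.castSucc < π (Fin.last n))
      (fun i j hij hj => lt_trans ((hπ i j).2 hij) hj)
    rw [List.all_eq_true] at h2
    rw [containsSquare_iff _ (extVal n L t)]
    · exact h2 t (List.mem_range.2 (by omega))
    · have e1 : ∀ i : Fin n, extVal n L t (i.castSucc : Fin (n + 1)) = 2 * (σ i : ℕ) + 1 := by
        intro i
        have : Nat.blt i n = true := by rw [Nat.blt_eq]; exact i.2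
        simp only [extVal, Fin.val_castSucc, this, cond_true, hσ]
      have e2 : extVal n L t (Fin.last n : Fin (n + 1)) = 2 * t := by
        have : Nat.blt n n = false := by
          rw [Bool.eq_false_iff, Ne, Nat.blt_eq]; omega
        simp only [extVal, Fin.val_last, this, cond_false]
      intro i j
      induction i using Fin.lastCases with
      | last =>
        induction j using Fin.lastCases with
        | last => simp
        | cast j =>
          have hne : π j.castSucc ≠ π (Fin.last n) :=
            fun h => (Fin.castSucc_lt_last j).ne (π.injective h)
          have := ht j
          rw [e1, e2, ← not_le, le_iff_lt_or_eq, or_iff_left hne, this]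
          omega
      | cast i =>
        induction j using Fin.lastCases with
        | last =>
          rw [e1, e2]
          have := ht i
          rw [this]
          omega
        | cast j =>
          rw [e1, e1, hπ, Fin.lt_def]
          omega

/-- Each of the four listed permutations (of lengths 14, 16, 18, 20) is right-crucial. -/
theorem rightCrucial_four_suffix_patterns :
    (∀ σ : Equiv.Perm (Fin 14),
      (∀ i : Fin 14,
        (σ i : ℕ) = [0, 4, 7, 3, 1, 2, 8, 6, 5, 11, 13, 10, 9, 12].getD (i : ℕ) 0) →
      RightCrucial σ) ∧
    (∀ σ : Equiv.Perm (Fin 16),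
      (∀ i : Fin 16,
        (σ i : ℕ) = [0, 4, 7, 3, 1, 2, 8, 6, 5, 13, 15, 12, 10, 11, 14, 9].getD (i : ℕ) 0) →
      RightCrucial σ) ∧
    (∀ σ : Equiv.Perm (Fin 18),
      (∀ i : Fin 18,
        (σ i : ℕ) =
          [0, 4, 7, 3, 1, 2, 8, 6, 5, 12, 13, 11, 9, 10, 16, 15, 14, 17].getD (i : ℕ) 0) →
      RightCrucial σ) ∧
    (∀ σ : Equiv.Perm (Fin 20),
      (∀ i : Fin 20,
        (σ i : ℕ) =
          [0, 9, 12, 8, 1, 7, 13, 11, 10, 14, 15, 6, 3, 4, 17, 16, 5, 18, 19, 2].getD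
            (i : ℕ) 0) →
      RightCrucial σ) := by
  refine ⟨fun σ h => rightCrucial_of_check _ σ h ?_ ?_, fun σ h => rightCrucial_of_check _ σ h ?_ ?_,
    fun σ h => rightCrucial_of_check _ σ h ?_ ?_, fun σ h => rightCrucial_of_check _ σ h ?_ ?_⟩ <;>
  clear h <;> clear σ <;> decide +kernel
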